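/- arXiv:2108.09005 — 2 statements merged into one kernel-verified Lean document; each statement's English description precedes it below -/
import Mathlib

section
/- The function 𝓔 : ℝ × (0, ∞) → ℝ is continuous on its entire domain ℝ × (0, ∞) (in particular, it is continuous at every point of the line g = 1). -/
open MeasureTheory ProbabilityTheory Matrix Filter Set

noncomputable def Phi (t : ℝ) : ℝ := ((gaussianReal 0 1) (Set.Iic t)).toReal
noncomputable def calE (r g : ℝ) : ℝ :=
  if g = 1 then Phi (-(|r| / 2))
  else
    1/2
      + (1/2) * Phi ((r - g * Real.sqrt (r^2 + (g^2 - 1) * Real.log (g^2))) / (g^2 - 1))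
      - (1/2) * Phi ((r + g * Real.sqrt (r^2 + (g^2 - 1) * Real.log (g^2))) / (g^2 - 1))
      + (1/2) * Phi ((r * g + Real.sqrt (r^2 + (g^2 - 1) * Real.log (g^2))) / (g^2 - 1))
      - (1/2) * Phi ((r * g - Real.sqrt (r^2 + (g^2 - 1) * Real.log (g^2))) / (g^2 - 1))

theorem Phi_sub_le {x y : ℝ} (h : x ≤ y) : |Phi y - Phi x| ≤ y - x := by
  have h1 : Phi y - Phi x = (gaussianReal 0 1).real (Set.Ioc x y) := by
    have : Set.Ioc x y = Set.Iic y \ Set.Iic x := by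
      ext z; simp [and_comm]
    rw [this, measureReal_sdiff (Set.Iic_subset_Iic.2 h) measurableSet_Iic]
    rfl
  rw [h1, abs_of_nonneg measureReal_nonneg]
  have h2 : (gaussianReal 0 1) (Set.Ioc x y) ≤ ENNReal.ofReal (y - x) := by
    rw [gaussianReal_apply 0 (by norm_num) (Set.Ioc x y)]
    calc ∫⁻ z in Set.Ioc x y, gaussianPDF 0 1 z ≤ ∫⁻ z in Set.Ioc x y, 1 := by
          apply lintegral_mono
          intro z
          rw [gaussianPDF]
          apply ENNReal.ofReal_le_one.2
          rw [gaussianPDFReal]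
          apply mul_le_one₀
          · apply inv_le_one_of_one_le₀
            apply Real.one_le_sqrt.2
            have := Real.pi_gt_three
            norm_num
            linarith
          · positivity
          · apply Real.exp_le_one_iff.2
            rw [neg_div]
            apply neg_nonpos.2
            positivity
      _ = ENNReal.ofReal (y - x) := by simp
  exact ENNReal.toReal_le_of_le_ofReal (by linarith) h2

theorem Phi_dist (x y : ℝ) : |Phi y - Phi x| ≤ |y - x| := by
  rcases le_total x y with h | h
  · exact (Phi_sub_le h).trans (le_abs_self _)
  · rw [abs_sub_comm, abs_sub_comm y x]
    exact (Phi_sub_le h).trans (le_abs_self _)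

theorem Phi_continuous : Continuous Phi := by
  have : LipschitzWith 1 Phi := LipschitzWith.of_dist_le_mul (fun x y => by
    simpa [Real.dist_eq] using Phi_dist y x)
  exact this.continuous

theorem Phi_neg (x : ℝ) : Phi (-x) = 1 - Phi x := by
  have h1 : (gaussianReal 0 1).map (fun z => -z) = gaussianReal 0 1 := by
    rw [gaussianReal_map_neg]; simp
  have h2 : (gaussianReal 0 1) (Set.Iic (-x)) = (gaussianReal 0 1) (Set.Ici x) := by
    conv_lhs => rw [← h1]
    rw [Measure.map_apply measurable_neg measurableSet_Iic]
    congr 1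
    ext z; simp
  have : NullSingletonClass (gaussianReal 0 1) := nullSingletonClass_gaussianReal (by norm_num)
  have h3 : (gaussianReal 0 1) (Set.Ici x) = (gaussianReal 0 1) (Set.Iic x)ᶜ := by
    rw [Set.compl_Iic]; exact (measure_congr Ioi_ae_eq_Ici).symm
  have h4 := probReal_compl_eq_one_sub (μ := gaussianReal 0 1) (measurableSet_Iic (a := x))
  unfold Phi
  rw [h2, h3]
  exact h4

theorem Phi_diff_tendsto {α : Type*} {l : Filter α} {u v w : α → ℝ}
    (h : ∀ᶠ q in l, u q - v q = w q) (hw : Tendsto w l (nhds 0)) :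
    Tendsto (fun q => Phi (u q) - Phi (v q)) l (nhds 0) := by
  apply squeeze_zero_norm' (a := fun q => |w q|)
  · filter_upwards [h] with q hq
    rw [← hq]
    exact Phi_dist _ _
  · simpa using hw.abs

/-- The square root of the discriminant. -/
noncomputable def sqD (q : ℝ × ℝ) : ℝ :=
  Real.sqrt (q.1^2 + (q.2^2 - 1) * Real.log (q.2^2))

theorem sqD_cont (q : ℝ × ℝ) (h : 0 < q.2) : ContinuousAt sqD q := by
  have h2 : q.2 ^ 2 ≠ 0 := by positivity
  unfold sqD
  fun_prop (disch := assumption)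

theorem main_tendsto (r : ℝ) (l : Filter (ℝ × ℝ)) (hl : l ≤ nhds (r, 1))
    (hne : ∀ᶠ q in l, q.2 ≠ 1) :
    Tendsto (fun q : ℝ × ℝ => 1/2
      + (1/2) * Phi ((q.1 - q.2 * sqD q) / (q.2^2 - 1))
      - (1/2) * Phi ((q.1 + q.2 * sqD q) / (q.2^2 - 1))
      + (1/2) * Phi ((q.1 * q.2 + sqD q) / (q.2^2 - 1))
      - (1/2) * Phi ((q.1 * q.2 - sqD q) / (q.2^2 - 1))) l (nhds (Phi (-(|r| / 2)))) := by
  have hpos : ∀ᶠ q : ℝ × ℝ in l, 0 < q.2 :=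
    hl (continuousAt_snd.eventually (lt_mem_nhds (by norm_num : (0:ℝ) < 1)))
  have hs : Tendsto sqD l (nhds |r|) := by
    have := (sqD_cont (r, 1) (by norm_num)).tendsto
    have h2 : sqD (r, 1) = |r| := by simp [sqD, Real.sqrt_sq_eq_abs]
    rw [h2] at this
    exact this.mono_left hl
  have hr : Tendsto (fun q : ℝ × ℝ => q.1) l (nhds r) := (continuousAt_fst (p := (r, (1:ℝ)))).tendsto.mono_left hl
  have hg : Tendsto (fun q : ℝ × ℝ => q.2) l (nhds 1) := (continuousAt_snd (p := (r, (1:ℝ)))).tendsto.mono_left hl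
  have hL : Tendsto (fun q : ℝ × ℝ => Real.log (q.2^2)) l (nhds 0) := by
    have := (hg.pow 2).log (by norm_num)
    simpa using this
  have hD : ∀ᶠ q : ℝ × ℝ in l, q.2 ^ 2 - 1 ≠ 0 := by
    filter_upwards [hpos, hne] with q h1 h2 h3
    have : (q.2 - 1) * (q.2 + 1) = 0 := by linarith
    rcases mul_eq_zero.1 this with h | h
    · exact h2 (by linarith)
    · linarith
  have hcb : ∀ᶠ q : ℝ × ℝ in l, (q.1 * q.2 + sqD q) / (q.2^2 - 1) - (q.1 + q.2 * sqD q) / (q.2^2 - 1)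
      = (q.1 - sqD q) / (q.2 + 1) := by
    filter_upwards [hpos, hD] with q h1 h2
    have h3 : q.2 + 1 ≠ 0 := by positivity
    rw [← sub_div, div_eq_div_iff h2 h3]
    ring
  have had : ∀ᶠ q : ℝ × ℝ in l, (q.1 - q.2 * sqD q) / (q.2^2 - 1) - (q.1 * q.2 - sqD q) / (q.2^2 - 1)
      = -(q.1 + sqD q) / (q.2 + 1) := by
    filter_upwards [hpos, hD] with q h1 h2
    have h3 : q.2 + 1 ≠ 0 := by positivity
    rw [← sub_div, div_eq_div_iff h2 h3]
    ring
  have hcb0 : 0 ≤ r → Tendsto (fun q : ℝ × ℝ => Phi ((q.1 * q.2 + sqD q) / (q.2^2 - 1)) - Phi ((q.1 + q.2 * sqD q) / (q.2^2 - 1))) l (nhds 0) := by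
    intro h
    refine Phi_diff_tendsto hcb ?_
    have := (hr.sub hs).div (hg.add_const 1) (by norm_num)
    simpa [abs_of_nonneg h, Pi.div_def] using this
  have had0 : r ≤ 0 → Tendsto (fun q : ℝ × ℝ => Phi ((q.1 - q.2 * sqD q) / (q.2^2 - 1)) - Phi ((q.1 * q.2 - sqD q) / (q.2^2 - 1))) l (nhds 0) := by
    intro h
    refine Phi_diff_tendsto had ?_
    have := (hr.add hs).neg.div (hg.add_const 1) (by norm_num)
    simpa [abs_of_nonpos h, Pi.div_def] using this
  have hsq : r ≠ 0 → ∀ᶠ q : ℝ × ℝ in l,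
      sqD q ^ 2 = q.1^2 + (q.2^2 - 1) * Real.log (q.2^2) := by
    intro h
    filter_upwards [hs.eventually (lt_mem_nhds (abs_pos.2 h))] with q hq
    exact Real.sq_sqrt (Real.sqrt_pos.1 hq).le
  rcases lt_trichotomy r 0 with h | h | h
  · have hb : Tendsto (fun q : ℝ × ℝ => (q.1 + q.2 * sqD q) / (q.2^2 - 1)) l (nhds (-(r/2))) := by
      have hden : Tendsto (fun q : ℝ × ℝ => q.1 - q.2 * sqD q) l (nhds (2 * r)) := by
        have := hr.sub (hg.mul hs)
        rw [abs_of_neg h] at this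
        convert this using 2; ring
      have h1 := ((hr.pow 2).add ((hg.pow 2).mul hL)).neg.div hden (by linarith)
      have e : -(r ^ 2 + 1 ^ 2 * 0) / (2 * r) = -(r/2) := by
        have hr0 : r ≠ 0 := by
          intro h0
          linarith
        field_simp
        try ring
      rw [e] at h1
      refine h1.congr' ?_
      filter_upwards [hD, hsq h.ne, hden.eventually_ne (by linarith : 2 * r ≠ 0)] with q h1 h2 h3
      simp only [Pi.div_apply]
      rw [div_eq_div_iff h3 h1]
      linear_combination q.2 ^ 2 * h2
    have hc : Tendsto (fun q : ℝ × ℝ => (q.1 * q.2 + sqD q) / (q.2^2 - 1)) l (nhds (r/2)) := by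
      have hden : Tendsto (fun q : ℝ × ℝ => q.1 * q.2 - sqD q) l (nhds (2 * r)) := by
        have := (hr.mul hg).sub hs
        rw [abs_of_neg h] at this
        convert this using 2; ring
      have h1 := ((hr.pow 2).sub hL).div hden (by linarith)
      have e : (r ^ 2 - 0) / (2 * r) = (r/2) := by
        have hr0 : r ≠ 0 := by
          intro h0
          linarith
        field_simp
        try ring
      rw [e] at h1
      refine h1.congr' ?_
      filter_upwards [hD, hsq h.ne, hden.eventually_ne (by linarith : 2 * r ≠ 0)] with q h1 h2 h3
      simp only [Pi.div_apply]
      rw [div_eq_div_iff h3 h1]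
      linear_combination h2
    have hb' := (Phi_continuous.tendsto _).comp hb
    have hc' := (Phi_continuous.tendsto _).comp hc
    have key := (((had0 h.le).add (hc'.sub hb')).add_const 1).const_mul (1/2)
    have e : 1 / 2 * (0 + (Phi (r/2) - Phi (-(r/2))) + 1) = Phi (-(|r|/2)) := by
      have : -(|r|/2) = r/2 := by rw [abs_of_neg h]; ring
      rw [this, Phi_neg]; ring
    rw [e] at key
    refine key.congr fun q => ?_
    simp only [Function.comp]
    ring
  · have key := (((had0 h.le).add (hcb0 h.ge)).add_const 1).const_mul (1/2)
    have e : 1 / 2 * (0 + 0 + 1) = Phi (-(|r|/2)) := by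
      have := Phi_neg 0
      rw [h]; simp at this ⊢; linarith
    rw [e] at key
    refine key.congr fun q => ?_
    ring
  · have ha : Tendsto (fun q : ℝ × ℝ => (q.1 - q.2 * sqD q) / (q.2^2 - 1)) l (nhds (-(r/2))) := by
      have hden : Tendsto (fun q : ℝ × ℝ => q.1 + q.2 * sqD q) l (nhds (2 * r)) := by
        have := hr.add (hg.mul hs)
        rw [abs_of_pos h] at this
        convert this using 2; ring
      have h1 := ((hr.pow 2).add ((hg.pow 2).mul hL)).neg.div hden (by linarith)
      have e : -(r ^ 2 + 1 ^ 2 * 0) / (2 * r) = -(r/2) := by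
        have hr0 : r ≠ 0 := by
          intro h0
          linarith
        field_simp
        try ring
      rw [e] at h1
      refine h1.congr' ?_
      filter_upwards [hD, hsq h.ne', hden.eventually_ne (by linarith : 2 * r ≠ 0)] with q h1 h2 h3
      simp only [Pi.div_apply]
      rw [div_eq_div_iff h3 h1]
      linear_combination q.2 ^ 2 * h2
    have hd : Tendsto (fun q : ℝ × ℝ => (q.1 * q.2 - sqD q) / (q.2^2 - 1)) l (nhds (r/2)) := by
      have hden : Tendsto (fun q : ℝ × ℝ => q.1 * q.2 + sqD q) l (nhds (2 * r)) := by
        have := (hr.mul hg).add hs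
        rw [abs_of_pos h] at this
        convert this using 2; ring
      have h1 := ((hr.pow 2).sub hL).div hden (by linarith)
      have e : (r ^ 2 - 0) / (2 * r) = (r/2) := by
        have hr0 : r ≠ 0 := by
          intro h0
          linarith
        field_simp
        try ring
      rw [e] at h1
      refine h1.congr' ?_
      filter_upwards [hD, hsq h.ne', hden.eventually_ne (by linarith : 2 * r ≠ 0)] with q h1 h2 h3
      simp only [Pi.div_apply]
      rw [div_eq_div_iff h3 h1]
      linear_combination h2
    have ha' := (Phi_continuous.tendsto _).comp ha
    have hd' := (Phi_continuous.tendsto _).comp hd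
    have key := (((hcb0 h.le).add (ha'.sub hd')).add_const 1).const_mul (1/2)
    have e : 1 / 2 * (0 + (Phi (-(r/2)) - Phi (r/2)) + 1) = Phi (-(|r|/2)) := by
      rw [abs_of_pos h, Phi_neg]; ring
    rw [e] at key
    refine key.congr fun q => ?_
    simp only [Function.comp]
    ring

/-- 𝓔 is continuous on ℝ × (0, ∞). -/
theorem calE_continuousOn :
    ContinuousOn (fun q : ℝ × ℝ => calE q.1 q.2) {q : ℝ × ℝ | 0 < q.2} := by
  rintro ⟨r, g⟩ hg
  apply ContinuousAt.continuousWithinAt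
  have hg : 0 < g := hg
  by_cases h1 : g = 1
  · subst h1
    have e : calE r 1 = Phi (-(|r|/2)) := by simp [calE]
    unfold ContinuousAt
    simp only [e]
    unfold calE
    apply Tendsto.if
    · have : Continuous (fun q : ℝ × ℝ => Phi (-(|q.1|/2))) :=
        Phi_continuous.comp (by fun_prop)
      exact (this.tendsto (r, 1)).mono_left inf_le_left
    · exact main_tendsto r _ inf_le_left
        (mem_inf_of_right (mem_principal_self _))
  · have hs := sqD_cont (r, g) hg
    have hD : g ^ 2 - 1 ≠ 0 := by
      intro h3
      have : (g - 1) * (g + 1) = 0 := by linarith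
      rcases mul_eq_zero.1 this with h | h
      · exact h1 (by linarith)
      · linarith
    have hP := Phi_continuous
    have : ContinuousAt (fun q : ℝ × ℝ => 1/2
      + (1/2) * Phi ((q.1 - q.2 * sqD q) / (q.2^2 - 1))
      - (1/2) * Phi ((q.1 + q.2 * sqD q) / (q.2^2 - 1))
      + (1/2) * Phi ((q.1 * q.2 + sqD q) / (q.2^2 - 1))
      - (1/2) * Phi ((q.1 * q.2 - sqD q) / (q.2^2 - 1))) (r, g) := by
      fun_prop (disch := exact hD)
    refine this.congr ?_
    have hne : ∀ᶠ q : ℝ × ℝ in nhds (r, g), q.2 ≠ 1 :=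
      (continuousAt_snd (p := (r, g))).eventually_ne h1
    filter_upwards [hne] with q hq
    simp only [calE, if_neg hq, sqD]
end

section
/- For every nonzero α ∈ ℝ^p, the classification error satisfies 0 < E(α) ≤ 1/2. -/
open MeasureTheory ProbabilityTheory Matrix Filter Set

noncomputable def Evec {p : ℕ} (μ0 μ1 : Fin p → ℝ) (S0 S1 : Matrix (Fin p) (Fin p) ℝ)
    (α : Fin p → ℝ) : ℝ :=
  calE ((dotProduct α μ0 - dotProduct α μ1) / Real.sqrt (dotProduct α (S1.mulVec α)))
    (Real.sqrt (dotProduct α (S0.mulVec α)) / Real.sqrt (dotProduct α (S1.mulVec α)))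

lemma Phi_eq (t : ℝ) : Phi t = ∫ x in Iic t, gaussianPDFReal 0 1 x := by
  unfold Phi
  rw [gaussianReal_apply_eq_integral 0 one_ne_zero, ENNReal.toReal_ofReal]
  exact integral_nonneg (fun x => gaussianPDFReal_nonneg 0 1 x)

lemma pdf_eq (x : ℝ) :
    gaussianPDFReal 0 1 x = (Real.sqrt (2 * Real.pi))⁻¹ * Real.exp (-x ^ 2 / 2) := by
  simp [gaussianPDFReal]

lemma pdf_cont : Continuous (gaussianPDFReal 0 1) := by
  have : gaussianPDFReal 0 1 =
      fun x => (Real.sqrt (2 * Real.pi))⁻¹ * Real.exp (-x ^ 2 / 2) := funext pdf_eq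
  rw [this]
  fun_prop

lemma Phi_hasDerivAt (t : ℝ) : HasDerivAt Phi (gaussianPDFReal 0 1 t) t := by
  have hint := integrable_gaussianPDFReal 0 1
  have h : Phi = fun t => Phi 0 + ∫ x in (0:ℝ)..t, gaussianPDFReal 0 1 x := by
    funext s
    rw [Phi_eq, Phi_eq,
      ← intervalIntegral.integral_Iic_sub_Iic hint.integrableOn hint.integrableOn]
    ring
  rw [h]
  exact (intervalIntegral.integral_hasDerivAt_right hint.intervalIntegrable
    (pdf_cont.stronglyMeasurableAtFilter _ _) pdf_cont.continuousAt).const_add _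

lemma Phi_strictMono : StrictMono Phi := by
  apply strictMono_of_deriv_pos
  intro x
  rw [(Phi_hasDerivAt x).deriv]
  exact gaussianPDFReal_pos 0 1 x one_ne_zero

lemma Phi_pos (t : ℝ) : 0 < Phi t :=
  lt_of_le_of_lt (b := Phi (t - 1)) ENNReal.toReal_nonneg (Phi_strictMono (by linarith))

lemma Phi_lt_one (t : ℝ) : Phi t < 1 :=
  lt_of_lt_of_le (b := Phi (t + 1)) (Phi_strictMono (by linarith))
    (by
      have : ((gaussianReal 0 1) (Set.Iic (t+1))) ≤ 1 := prob_le_one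
      exact ENNReal.toReal_mono ENNReal.one_ne_top this)

lemma Phi_zero : Phi 0 = 1 / 2 := by
  have hint := integrable_gaussianPDFReal 0 1
  have h1 := integral_comp_neg_Iic (0:ℝ) (gaussianPDFReal 0 1)
  have h2 : ∀ x, gaussianPDFReal 0 1 (-x) = gaussianPDFReal 0 1 x := by
    intro x; simp [pdf_eq]
  simp only [h2, neg_zero] at h1
  have h3 := intervalIntegral.integral_Iic_add_Ioi (b := (0:ℝ)) hint.integrableOn hint.integrableOn
  rw [integral_gaussianPDFReal_eq_one 0 one_ne_zero, ← h1, ← Phi_eq] at h3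
  linarith

lemma F_hasDerivAt (r g z : ℝ) : HasDerivAt (fun z => Phi z - Phi (g * z - r))
    (gaussianPDFReal 0 1 z - gaussianPDFReal 0 1 (g * z - r) * g) z := by
  have h : HasDerivAt (fun z : ℝ => g * z - r) g z := by
    simpa using ((hasDerivAt_id z).const_mul g).sub_const r
  have h2 : HasDerivAt (fun z : ℝ => Phi (g * z - r))
      (gaussianPDFReal 0 1 (g * z - r) * g) z :=
    HasDerivAt.comp (h₂ := Phi) z (Phi_hasDerivAt (g * z - r)) h
  exact (Phi_hasDerivAt z).sub h2

lemma pdf_g (r g z : ℝ) (hg : 0 < g) : gaussianPDFReal 0 1 (g * z - r) * g =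
    (Real.sqrt (2 * Real.pi))⁻¹ * Real.exp (-(g * z - r) ^ 2 / 2 + Real.log g) := by
  rw [pdf_eq, Real.exp_add, Real.exp_log hg, mul_assoc]

lemma calE_mem (r g : ℝ) (hg : 0 < g) : 0 < calE r g ∧ calE r g ≤ 1 / 2 := by
  unfold calE
  split_ifs with h
  · refine ⟨Phi_pos _, ?_⟩
    rw [← Phi_zero]
    apply Phi_strictMono.monotone
    have := abs_nonneg r
    linarith
  have hl : Real.log (g ^ 2) = 2 * Real.log g := by simp
  rw [hl]
  have hpos : 0 < (g ^ 2 - 1) * (2 * Real.log g) := by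
    rcases lt_or_gt_of_ne h with h | h
    · have := Real.log_neg hg h
      have h2 : g ^ 2 - 1 < 0 := by nlinarith
      exact mul_pos_of_neg_of_neg h2 (by linarith)
    · have := Real.log_pos h
      have : 0 < g ^ 2 - 1 := by nlinarith
      positivity
  have hd : g ^ 2 - 1 ≠ 0 := by
    intro h0; rw [h0] at hpos; simp at hpos
  have hD : 0 < r ^ 2 + (g ^ 2 - 1) * (2 * Real.log g) := by positivity
  set D := Real.sqrt (r ^ 2 + (g ^ 2 - 1) * (2 * Real.log g)) with hDdef
  have hDpos : 0 < D := Real.sqrt_pos.mpr hD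
  have hDsq : D ^ 2 = r ^ 2 + (g ^ 2 - 1) * (2 * Real.log g) := Real.sq_sqrt hD.le
  set c := (r * g - D) / (g ^ 2 - 1) with hc
  set e := (r * g + D) / (g ^ 2 - 1) with he
  have ha : (r - g * D) / (g ^ 2 - 1) = g * c - r := by rw [hc]; field_simp; ring
  have hb : (r + g * D) / (g ^ 2 - 1) = g * e - r := by rw [he]; field_simp; ring
  rw [ha, hb]
  have hfac : ∀ z, (g * z - r) ^ 2 - z ^ 2 - 2 * Real.log g
      = (g ^ 2 - 1) * ((z - c) * (z - e)) := by
    intro z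
    have h1 : (g ^ 2 - 1) * c = r * g - D := by rw [hc]; field_simp
    have h2 : (g ^ 2 - 1) * e = r * g + D := by rw [he]; field_simp
    apply mul_left_cancel₀ hd
    have : (g ^ 2 - 1) * ((g ^ 2 - 1) * ((z - c) * (z - e)))
      = ((g ^ 2 - 1) * z - (g ^ 2 - 1) * c) * ((g ^ 2 - 1) * z - (g ^ 2 - 1) * e) := by ring
    rw [this, h1, h2]
    linear_combination hDsq
  have hcont : Continuous (fun z => Phi z - Phi (g * z - r)) :=
    continuous_iff_continuousAt.mpr (fun z => (F_hasDerivAt r g z).continuousAt)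
  have hs : 0 ≤ (Real.sqrt (2 * Real.pi))⁻¹ := by positivity
  have key : Phi e - Phi (g * e - r) ≤ Phi c - Phi (g * c - r) := by
    rcases lt_or_gt_of_ne h with h | h
    · have hdn : g ^ 2 - 1 < 0 := by nlinarith
      have hec : e ≤ c := by
        rw [hc, he]; exact div_le_div_of_nonpos_of_le hdn.le (by linarith)
      have hm : MonotoneOn (fun z => Phi z - Phi (g * z - r)) (Icc e c) := by
        apply monotoneOn_of_deriv_nonneg (convex_Icc _ _) hcont.continuousOn
          (fun z _ => (F_hasDerivAt r g z).differentiableAt.differentiableWithinAt)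
        intro z hz
        rw [interior_Icc] at hz
        rw [(F_hasDerivAt r g z).deriv, pdf_g r g z hg, pdf_eq, sub_nonneg]
        apply mul_le_mul_of_nonneg_left _ hs
        apply Real.exp_le_exp.mpr
        have h1 := hfac z
        have h2 : 0 ≤ (g ^ 2 - 1) * ((z - c) * (z - e)) :=
          mul_nonneg_of_nonpos_of_nonpos hdn.le
            (mul_nonpos_of_nonpos_of_nonneg (by linarith [hz.2]) (by linarith [hz.1]))
        linarith
      exact hm (left_mem_Icc.mpr hec) (right_mem_Icc.mpr hec) hec
    · have hdn : 0 < g ^ 2 - 1 := by nlinarith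
      have hec : c ≤ e := by
        rw [hc, he]; exact div_le_div_of_nonneg_right (by linarith) hdn.le
      have hm : AntitoneOn (fun z => Phi z - Phi (g * z - r)) (Icc c e) := by
        apply antitoneOn_of_deriv_nonpos (convex_Icc _ _) hcont.continuousOn
          (fun z _ => (F_hasDerivAt r g z).differentiableAt.differentiableWithinAt)
        intro z hz
        rw [interior_Icc] at hz
        rw [(F_hasDerivAt r g z).deriv, pdf_g r g z hg, pdf_eq, sub_nonpos]
        apply mul_le_mul_of_nonneg_left _ hs
        apply Real.exp_le_exp.mpr
        have h1 := hfac z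
        have h2 : (g ^ 2 - 1) * ((z - c) * (z - e)) ≤ 0 :=
          mul_nonpos_of_nonneg_of_nonpos hdn.le
            (mul_nonpos_of_nonneg_of_nonpos (by linarith [hz.1]) (by linarith [hz.2]))
        linarith
      exact hm (left_mem_Icc.mpr hec) (right_mem_Icc.mpr hec) hec
  refine ⟨?_, by linarith⟩
  rcases lt_or_gt_of_ne h with h | h
  · have hdn : g ^ 2 - 1 < 0 := by nlinarith
    have hec : e ≤ c := by
      rw [hc, he]; exact div_le_div_of_nonpos_of_le hdn.le (by linarith)
    have h1 : Phi (g * e - r) ≤ Phi (g * c - r) := Phi_strictMono.monotone (by nlinarith)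
    linarith [Phi_pos e, Phi_lt_one c]
  · have hdn : 0 < g ^ 2 - 1 := by nlinarith
    have hec : c ≤ e := by
      rw [hc, he]; exact div_le_div_of_nonneg_right (by linarith) hdn.le
    have h1 : Phi c ≤ Phi e := Phi_strictMono.monotone hec
    linarith [Phi_pos (g * c - r), Phi_lt_one (g * e - r)]

/-- For every nonzero α, 0 < E(α) ≤ 1/2. -/
theorem Evec_mem_Ioc {p : ℕ} (hp : 1 ≤ p) (μ0 μ1 : Fin p → ℝ)
    (S0 S1 : Matrix (Fin p) (Fin p) ℝ) (h0 : S0.PosDef) (h1 : S1.PosDef)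
    (α : Fin p → ℝ) (hα : α ≠ 0) :
    0 < Evec μ0 μ1 S0 S1 α ∧ Evec μ0 μ1 S0 S1 α ≤ 1/2 := by
  unfold Evec
  apply calE_mem
  have a0 := h0.dotProduct_mulVec_pos hα
  have a1 := h1.dotProduct_mulVec_pos hα
  simp only [star_trivial] at a0 a1
  exact div_pos (Real.sqrt_pos.mpr a0) (Real.sqrt_pos.mpr a1)
end
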